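/- Define g_i = (J_i')⁻¹ : ℝ → (u̲_i, ū_i) (the inverse of the strictly increasing bijection J_i' : (u̲_i, ū_i) → ℝ), and define F : ℝ^m → ℝ^m by F(η) = −(1/β) 𝟙 (Σ_{i=1}^m g_i(η_i) − d) − L η. Then there exists a unique η̄ ∈ span(𝟙) with F(η̄) = 0, and there exists a continuously differentiable function 𝒱 : ℝ^m → ℝ such that 𝒱(η̄) = 0, 𝒱(η) > 0 for all η ≠ η̄, 𝒱(η) → +∞ as ‖η‖₂ → ∞, and ∇𝒱(η)ᵀ F(η) < 0 for every η ≠ η̄. (Existence of a strict, radially unbounded Lyapunov function for the reduced DAPI dynamics η̇ = −Δω̄(u) − Lη, u = ∇J*(η); the core of the proof of the paper's Theorem 1.) -/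

import Mathlib

open Filter Matrix Polynomial

open scoped InnerProductSpace NNReal TensorProduct Topology

/-!
Let `w` be the left null vector of `L` normalised by `w 𝟙 = 1`. Along the dynamics the averaged
coordinate `w η` moves with velocity `-G η`, where `G = Δω̄`, while `η - (w η) 𝟙` is damped by `L`
alone. The Lyapunov function is the convex potential `∫ h` of `h s = G (s 𝟙)` at `w η`, plus
`a ‖S η‖²`, where `S` has kernel `ℝ 𝟙` and `Re ⟪S x, S (L x)⟫ ≥ c ‖S x‖²`. Since `G` is Lipschitz,
`G η` differs from `h (w η)` by `O(‖S η‖)`, and a large weight `a` absorbs the cross term.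

The map `S` is built over `ℂ` one left eigenvector `l` at a time: on `ker l` it exists by induction,
and adding a large multiple of `l` as a new coordinate absorbs the coupling into `ker l`.
-/

section Accretive

variable {𝕜 V H : Type*} [RCLike 𝕜] [AddCommGroup V] [Module 𝕜 V]
  [NormedAddCommGroup H] [InnerProductSpace 𝕜 H]

/-- `T` is `c`-strongly accretive for the semi-inner product `⟪S x, S y⟫` pulled back along `S`.
This is the Lyapunov inequality `T*P + PT ≥ 2cP` with `P = S*S`. -/
def StronglyAccretiveAlong (S : V →ₗ[𝕜] H) (T : Module.End 𝕜 V) (c : ℝ) : Prop :=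
  ∀ x, c * ‖S x‖ ^ 2 ≤ RCLike.re ⟪S x, S (T x)⟫_𝕜

theorem exists_pos_scaling_absorbing_cross_term {c r : ℝ} (hc : 0 < c) (hr : 0 < r) (b : ℝ) :
    ∃ A > 0, ∃ c' > 0, ∀ u t : ℝ,
      c' * ((A * t) ^ 2 + u ^ 2) ≤ r * (A * t) ^ 2 + c * u ^ 2 - u * (t * b) := by
  refine ⟨1 + b ^ 2 / (c * r), by positivity, min (c / 2) (r / 2), by positivity, fun u t ↦ ?_⟩
  set A := 1 + b ^ 2 / (c * r)
  have hb : b ^ 2 / c ≤ r * A ^ 2 := by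
    have h0 : 0 ≤ b ^ 2 / (c * r) := by positivity
    calc b ^ 2 / c = r * (b ^ 2 / (c * r)) := by field_simp
      _ ≤ r * A ^ 2 := by gcongr; nlinarith
  have young : u * (t * b) ≤ c / 2 * u ^ 2 + b ^ 2 / c * t ^ 2 / 2 := by
    have h : c / 2 * u ^ 2 + b ^ 2 / c * t ^ 2 / 2 - u * (t * b) =
        (c * u - t * b) ^ 2 / (2 * c) := by
      field_simp
      ring
    have : 0 ≤ (c * u - t * b) ^ 2 / (2 * c) := by positivity
    linarith
  have cross : u * (t * b) ≤ c / 2 * u ^ 2 + r / 2 * (A * t) ^ 2 := by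
    have := mul_le_mul_of_nonneg_right hb (sq_nonneg t)
    linarith [mul_pow A t 2]
  calc min (c / 2) (r / 2) * ((A * t) ^ 2 + u ^ 2)
      = min (c / 2) (r / 2) * (A * t) ^ 2 + min (c / 2) (r / 2) * u ^ 2 := mul_add ..
    _ ≤ r / 2 * (A * t) ^ 2 + c / 2 * u ^ 2 := by
      gcongr
      exacts [min_le_right .., min_le_left ..]
    _ ≤ r * (A * t) ^ 2 + c * u ^ 2 - u * (t * b) := by linarith

/-- The projection onto `ker l` along `v`, for a functional normalised by `l v = 1`. -/
def projKer (l : Module.Dual 𝕜 V) (v : V) (hv : l v = 1) : V →ₗ[𝕜] LinearMap.ker l :=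
  (LinearMap.id - l.smulRight v).codRestrict _ fun x ↦ by simp [hv]

theorem coe_projKer (l : Module.Dual 𝕜 V) {v : V} (hv : l v = 1) (x : V) :
    (projKer l v hv x : V) = x - l x • v := rfl

theorem projKer_apply_of_comp_eq_smul {T : Module.End 𝕜 V} {l : Module.Dual 𝕜 V} {lam : 𝕜}
    (hl : l ∘ₗ T = lam • l) (hker : ∀ x ∈ LinearMap.ker l, T x ∈ LinearMap.ker l)
    {v : V} (hv : l v = 1) (x : V) :
    projKer l v hv (T x) =
      T.restrict hker (projKer l v hv x) + l x • projKer l v hv (T v) := by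
  have hlT : ∀ y, l (T y) = lam * l y := fun y ↦ LinearMap.congr_fun hl y
  ext
  simp only [Submodule.coe_add, Submodule.coe_smul, LinearMap.coe_restrict_apply, coe_projKer,
    map_sub, map_smul, hlT, hv]
  module

theorem StronglyAccretiveAlong.exists_extend_of_ker {T : Module.End 𝕜 V} {l : Module.Dual 𝕜 V}
    {lam : 𝕜} (hl : l ∘ₗ T = lam • l) (hlam : 0 < RCLike.re lam) (hl₀ : l ≠ 0)
    (hker : ∀ x ∈ LinearMap.ker l, T x ∈ LinearMap.ker l) {S : LinearMap.ker l →ₗ[𝕜] H}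
    (hS : Function.Injective S) {c : ℝ} (hc : 0 < c)
    (h : StronglyAccretiveAlong S (T.restrict hker) c) :
    ∃ S' : V →ₗ[𝕜] WithLp 2 (𝕜 × H), Function.Injective S' ∧
      ∃ c' > 0, StronglyAccretiveAlong S' T c' := by
  obtain ⟨v, hv⟩ := LinearMap.surjective hl₀ 1
  set π := projKer l v hv
  obtain ⟨A, hA, c', hc', hbound⟩ :=
    exists_pos_scaling_absorbing_cross_term hc hlam ‖S (π (T v))‖
  let S' : V →ₗ[𝕜] WithLp 2 (𝕜 × H) :=
    (WithLp.linearEquiv 2 𝕜 (𝕜 × H)).symm ∘ₗ ((A : 𝕜) • l).prod (S ∘ₗ π)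
  have hS' : ∀ x, S' x = WithLp.toLp 2 ((A : 𝕜) * l x, S (π x)) := fun _ ↦ rfl
  refine ⟨S', (injective_iff_map_eq_zero S').mpr fun x hx ↦ ?_, c', hc', fun x ↦ ?_⟩
  · obtain ⟨hlx, hSx⟩ : l x = 0 ∧ S (π x) = 0 := by simpa [hS', hA.ne'] using hx
    have hπx : π x = 0 := (map_eq_zero_iff S hS).mp hSx
    simpa [π, coe_projKer, hlx] using congrArg Subtype.val hπx
  · have hlT : l (T x) = lam * l x := LinearMap.congr_fun hl x
    have hfst : RCLike.re ⟪(A : 𝕜) * l x, (A : 𝕜) * l (T x)⟫_𝕜 =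
        RCLike.re lam * (A * ‖l x‖) ^ 2 := by
      rw [hlT, mul_left_comm, ← smul_eq_mul lam, inner_smul_right, inner_self_eq_norm_sq_to_K,
        norm_mul, RCLike.norm_of_nonneg hA.le, ← RCLike.ofReal_pow, RCLike.re_mul_ofReal]
    have hsnd : c * ‖S (π x)‖ ^ 2 - ‖S (π x)‖ * (‖l x‖ * ‖S (π (T v))‖) ≤
        RCLike.re ⟪S (π x), S (π (T x))⟫_𝕜 := by
      rw [projKer_apply_of_comp_eq_smul hl hker hv x, map_add, map_smul, inner_add_right, map_add,
        ← norm_smul]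
      linarith [h (π x), neg_le_of_abs_le ((RCLike.abs_re_le_norm _).trans
        (norm_inner_le_norm (𝕜 := 𝕜) (S (π x)) (l x • S (π (T v)))))]
    calc c' * ‖S' x‖ ^ 2 = c' * ((A * ‖l x‖) ^ 2 + ‖S (π x)‖ ^ 2) := by
          rw [WithLp.prod_norm_sq_eq_of_L2]
          simp [hS', RCLike.norm_of_nonneg hA.le]
      _ ≤ RCLike.re ⟪(A : 𝕜) * l x, (A : 𝕜) * l (T x)⟫_𝕜 +
          RCLike.re ⟪S (π x), S (π (T x))⟫_𝕜 := by
        linarith [hbound ‖S (π x)‖ ‖l x‖]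
      _ = RCLike.re ⟪S' x, S' (T x)⟫_𝕜 := by
        rw [WithLp.prod_inner_apply, map_add, hS', hS']

theorem StronglyAccretiveAlong.isometry_comp {H' : Type*} [NormedAddCommGroup H']
    [InnerProductSpace 𝕜 H'] {S : V →ₗ[𝕜] H} {T : Module.End 𝕜 V} {c : ℝ}
    (h : StronglyAccretiveAlong S T c) (U : H →ₗᵢ[𝕜] H') :
    StronglyAccretiveAlong (U.toLinearMap ∘ₗ S) T c := fun x ↦ by
  simpa using h x

end Accretive

theorem hasEigenvalue_of_restrict {R M : Type*} [CommRing R] [AddCommGroup M] [Module R M]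
    {T : Module.End R M} {p : Submodule R M} {hp : ∀ x ∈ p, T x ∈ p} {z : R}
    (h : Module.End.HasEigenvalue (T.restrict hp) z) : T.HasEigenvalue z := fun hbot ↦
  h (Module.End.eigenspace_restrict_eq_bot hp (by simp [hbot]))

theorem exists_dual_comp_eq_smul {K V : Type*} [Field K] [AddCommGroup V] [Module K V]
    [FiniteDimensional K V] {T : Module.End K V} {z : K} (hz : T.HasEigenvalue z) :
    ∃ l : Module.Dual K V, l ≠ 0 ∧ l ∘ₗ T = z • l := by
  have hrange : LinearMap.range (T - algebraMap K _ z) < ⊤ := by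
    rw [lt_top_iff_ne_top, Ne, LinearMap.range_eq_top, ← LinearMap.injective_iff_surjective,
      ← LinearMap.ker_eq_bot]
    rwa [Module.End.HasEigenvalue, Module.End.HasUnifEigenvalue, ← Module.End.eigenspace,
      Module.End.eigenspace_def] at hz
  obtain ⟨l, hl, hle⟩ := Submodule.exists_le_ker_of_lt_top _ hrange
  refine ⟨l, hl, LinearMap.ext fun x ↦ sub_eq_zero.mp ?_⟩
  simpa using hle (LinearMap.mem_range_self _ x)

theorem exists_injective_stronglyAccretiveAlong {V : Type*} [AddCommGroup V] [Module ℂ V]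
    [FiniteDimensional ℂ V] {T : Module.End ℂ V} (hT : ∀ z, T.HasEigenvalue z → 0 < z.re) :
    ∃ S : V →ₗ[ℂ] EuclideanSpace ℂ (Fin (Module.finrank ℂ V)), Function.Injective S ∧
      ∃ c > 0, StronglyAccretiveAlong S T c := by
  induction hn : Module.finrank ℂ V generalizing V with
  | zero =>
    have := Module.finrank_zero_iff.mp hn
    exact ⟨0, Function.injective_of_subsingleton _, 1, one_pos, fun x ↦ by simp⟩
  | succ n ih =>
    have := Module.nontrivial_of_finrank_eq_succ hn
    obtain ⟨lam, hlam⟩ := Module.End.exists_eigenvalue T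
    obtain ⟨l, hl₀, hl⟩ := exists_dual_comp_eq_smul hlam
    have hker : ∀ x ∈ LinearMap.ker l, T x ∈ LinearMap.ker l := fun x hx ↦ by
      have hlT : l (T x) = lam • l x := LinearMap.congr_fun hl x
      rw [LinearMap.mem_ker, hlT, LinearMap.mem_ker.mp hx, smul_zero]
    have hfinrank : Module.finrank ℂ (LinearMap.ker l) = n := by
      have := Module.Dual.finrank_ker_add_one_of_ne_zero hl₀
      lia
    obtain ⟨S, hS, c, hc, hacc⟩ :=
      ih (fun z hz ↦ hT z (hasEigenvalue_of_restrict (hp := hker) hz)) hfinrank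
    obtain ⟨S', hS', c', hc', hacc'⟩ :=
      hacc.exists_extend_of_ker hl (hT lam hlam) hl₀ hker hS hc
    have hdim : Module.finrank ℂ (WithLp 2 (ℂ × EuclideanSpace ℂ (Fin n))) = n + 1 := by
      rw [(WithLp.linearEquiv 2 ℂ _).finrank_eq]
      simp [add_comm]
    let U := (stdOrthonormalBasis ℂ _).reindex (finCongr hdim) |>.repr
    exact ⟨U.toLinearIsometry.toLinearMap ∘ₗ S', U.injective.comp hS', c', hc',
      hacc'.isometry_comp U.toLinearIsometry⟩

theorem disjoint_ker_range_of_rootMultiplicity_le_one {K V : Type*} [Field K] [AddCommGroup V]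
    [Module K V] [FiniteDimensional K V] {T : Module.End K V}
    (hT : T.charpoly.rootMultiplicity 0 ≤ 1) : Disjoint (LinearMap.ker T) (LinearMap.range T) := by
  have hfinrank : Module.finrank K (T.genEigenspace 0 (2 : ℕ)) ≤ 1 :=
    (T.finrank_genEigenspace_le 0 2).trans hT
  rw [Submodule.disjoint_def]
  rintro _ hTx ⟨x, rfl⟩
  rw [LinearMap.mem_ker] at hTx
  have hmem : x ∈ T.genEigenspace 0 (2 : ℕ) ∧ T x ∈ T.genEigenspace 0 (2 : ℕ) := by
    constructor <;> rw [Module.End.mem_genEigenspace_nat] <;> simp [pow_two, hTx]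
  obtain ⟨v, hspan⟩ := finrank_le_one_iff.mp hfinrank
  obtain ⟨a, ha⟩ := hspan ⟨x, hmem.1⟩
  obtain ⟨b, hb⟩ := hspan ⟨T x, hmem.2⟩
  have hx : a • (v : V) = x := congrArg Subtype.val ha
  have hy : b • (v : V) = T x := congrArg Subtype.val hb
  have hb_smul : b • T x = 0 := calc
    b • T x = T (a • b • (v : V)) := by rw [smul_comm a b, hx, map_smul]
    _ = 0 := by rw [hy, map_smul, hTx, smul_zero]
  rcases smul_eq_zero.mp hb_smul with rfl | h
  · rw [← hy, zero_smul]
  · exact h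

theorem exists_stronglyAccretiveAlong_ker_eq {V : Type*} [AddCommGroup V] [Module ℂ V]
    [FiniteDimensional ℂ V] {T : Module.End ℂ V} (hT : ∀ z, T.HasEigenvalue z → z ≠ 0 → 0 < z.re)
    (hdisj : Disjoint (LinearMap.ker T) (LinearMap.range T)) :
    ∃ (k : ℕ) (S : V →ₗ[ℂ] EuclideanSpace ℂ (Fin k)), LinearMap.ker S = LinearMap.ker T ∧
      ∃ c > 0, StronglyAccretiveAlong S T c := by
  have hp : ∀ x ∈ LinearMap.range T, T x ∈ LinearMap.range T := fun x _ ↦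
    LinearMap.mem_range_self T x
  have hrange : ∀ z, Module.End.HasEigenvalue (T.restrict hp) z → 0 < z.re := by
    refine fun z hz ↦ hT z (hasEigenvalue_of_restrict hz) ?_
    rintro rfl
    exact hz (Module.End.eigenspace_restrict_eq_bot hp (by simpa using hdisj))
  obtain ⟨S, hS, c, hc, hacc⟩ := exists_injective_stronglyAccretiveAlong hrange
  -- Composing with `T` kills `ker T` and commutes with `T`, so the bound on `range T` transfers.
  refine ⟨_, S ∘ₗ T.rangeRestrict, ?_, c, hc, fun x ↦ hacc (T.rangeRestrict x)⟩
  rw [LinearMap.ker_comp_of_ker_eq_bot _ (LinearMap.ker_eq_bot.mpr hS),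
    LinearMap.ker_rangeRestrict]

theorem exists_real_stronglyAccretiveAlong_ker_eq {E : Type*} [AddCommGroup E] [Module ℝ E]
    [FiniteDimensional ℝ E] {L : Module.End ℝ E} (hsimple : L.charpoly.rootMultiplicity 0 ≤ 1)
    (hspec : ∀ z : ℂ, (L.charpoly.map (algebraMap ℝ ℂ)).IsRoot z → z ≠ 0 → 0 < z.re) :
    ∃ (k : ℕ) (S : E →ₗ[ℝ] EuclideanSpace ℂ (Fin k)), LinearMap.ker S = LinearMap.ker L ∧
      ∃ c > 0, StronglyAccretiveAlong S L c := by
  have hcharpoly : (L.baseChange ℂ).charpoly = L.charpoly.map (algebraMap ℝ ℂ) :=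
    L.charpoly_baseChange ℂ
  have hdisj := disjoint_ker_range_of_rootMultiplicity_le_one (T := L.baseChange ℂ) <| by
    rwa [hcharpoly, ← map_zero (algebraMap ℝ ℂ),
      ← eq_rootMultiplicity_map (algebraMap ℝ ℂ).injective]
  have heigen : ∀ z : ℂ, Module.End.HasEigenvalue (L.baseChange ℂ) z → z ≠ 0 → 0 < z.re :=
    fun z hz ↦ hspec z (by rwa [← hcharpoly, ← Module.End.hasEigenvalue_iff_isRoot_charpoly])
  obtain ⟨k, S, hker, c, hc, hacc⟩ := exists_stronglyAccretiveAlong_ker_eq heigen hdisj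
  refine ⟨k, S.restrictScalars ℝ ∘ₗ TensorProduct.mk ℝ ℂ E 1, ?_, c, hc, fun x ↦ ?_⟩
  · ext x
    have hinj : Function.Injective (TensorProduct.mk ℝ ℂ E 1) :=
      Module.FaithfullyFlat.tensorProduct_mk_injective (A := ℝ) (B := ℂ) E
    calc x ∈ LinearMap.ker (S.restrictScalars ℝ ∘ₗ TensorProduct.mk ℝ ℂ E 1)
      ↔ (1 : ℂ) ⊗ₜ[ℝ] x ∈ LinearMap.ker S := Iff.rfl
      _ ↔ TensorProduct.mk ℝ ℂ E 1 (L x) = 0 := by rw [hker]; rfl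
      _ ↔ x ∈ LinearMap.ker L := map_eq_zero_iff _ hinj
  · calc c * ‖S (1 ⊗ₜ x)‖ ^ 2 ≤ RCLike.re ⟪S (1 ⊗ₜ x), S (1 ⊗ₜ L x)⟫_ℂ := hacc (1 ⊗ₜ x)
      _ = ⟪S (1 ⊗ₜ x), S (1 ⊗ₜ L x)⟫_ℝ := by
        rw [PiLp.inner_apply, PiLp.inner_apply, map_sum]
        rfl

theorem exists_dual_comp_eq_zero {K V : Type*} [Field K] [AddCommGroup V] [Module K V]
    [FiniteDimensional K V] {T : Module.End K V} (hT : T.charpoly.rootMultiplicity 0 ≤ 1)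
    {e : V} (he : e ≠ 0) (hTe : T e = 0) :
    ∃ w : Module.Dual K V, w e = 1 ∧ ∀ x, w (T x) = 0 := by
  have he_range : e ∉ LinearMap.range T := fun h ↦
    he (Submodule.disjoint_def.mp (disjoint_ker_range_of_rootMultiplicity_le_one hT) e hTe h)
  obtain ⟨w, hwe, hw⟩ := Submodule.exists_le_ker_of_notMem he_range
  refine ⟨(w e)⁻¹ • w, inv_mul_cancel₀ hwe, fun x ↦ ?_⟩
  have : w (T x) = 0 := hw (LinearMap.mem_range_self T x)
  rw [LinearMap.smul_apply, this, smul_zero]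

theorem ker_eq_span_singleton_of_rootMultiplicity_le_one {K V : Type*} [Field K] [AddCommGroup V]
    [Module K V] [FiniteDimensional K V] {T : Module.End K V}
    (hT : T.charpoly.rootMultiplicity 0 ≤ 1) {e : V} (he : e ≠ 0) (hTe : T e = 0) :
    LinearMap.ker T = K ∙ e := by
  have hfinrank : Module.finrank K (LinearMap.ker T) ≤ 1 := by
    have := T.finrank_genEigenspace_le 0 1
    rw [Nat.cast_one, ← Module.End.eigenspace, Module.End.eigenspace_zero] at this
    exact this.trans hT
  exact (Submodule.eq_of_le_of_finrank_le ((Submodule.span_singleton_le_iff_mem ..).mpr hTe)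
    (hfinrank.trans_eq (finrank_span_singleton he).symm)).symm

section Potential

variable {h : ℝ → ℝ} {s₀ : ℝ}

theorem mul_sub_le_integral_of_monotone (hh : Monotone h) (s t : ℝ) :
    h t * (s - t) ≤ ∫ x in t..s, h x := by
  rcases le_total t s with hts | hst
  · calc h t * (s - t) = ∫ _ in t..s, h t := by simp [mul_comm]
      _ ≤ ∫ x in t..s, h x := intervalIntegral.integral_mono_on hts
          intervalIntegrable_const hh.intervalIntegrable fun x hx ↦ hh hx.1
  · rw [intervalIntegral.integral_symm, le_neg]
    calc ∫ x in s..t, h x ≤ ∫ _ in s..t, h t := intervalIntegral.integral_mono_on hst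
          hh.intervalIntegrable intervalIntegrable_const fun x hx ↦ hh hx.2
      _ = -(h t * (s - t)) := by
        rw [intervalIntegral.integral_const, smul_eq_mul]
        ring

theorem integral_nonneg_of_monotone_of_eq_zero (hh : Monotone h) (h₀ : h s₀ = 0) (s : ℝ) :
    0 ≤ ∫ t in s₀..s, h t := by
  simpa [h₀] using mul_sub_le_integral_of_monotone hh s s₀

theorem integral_pos_of_strictMono_of_eq_zero (hh : StrictMono h) (h₀ : h s₀ = 0) {s : ℝ}
    (hs : s ≠ s₀) : 0 < ∫ t in s₀..s, h t := by
  set r := (s₀ + s) / 2 with hr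
  have hadd := intervalIntegral.integral_add_adjacent_intervals
    (hh.monotone.intervalIntegrable (μ := MeasureTheory.volume) (a := s₀) (b := r))
    (hh.monotone.intervalIntegrable (b := s))
  have hfirst := integral_nonneg_of_monotone_of_eq_zero hh.monotone h₀ r
  have hsecond := mul_sub_le_integral_of_monotone hh.monotone s r
  have hpos : 0 < h r * (s - r) := by
    rcases hs.lt_or_gt with hlt | hlt
    · exact mul_pos_of_neg_of_neg (h₀ ▸ hh (by linarith)) (by linarith)
    · exact mul_pos (h₀ ▸ hh (by linarith)) (by linarith)
  linarith

theorem tendsto_integral_cocompact_of_strictMono (hh : StrictMono h) (h₀ : h s₀ = 0) :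
    Tendsto (fun s ↦ ∫ t in s₀..s, h t) (cocompact ℝ) atTop := by
  have hbound : ∀ r s, (∫ t in s₀..r, h t) + h r * (s - r) ≤ ∫ t in s₀..s, h t := fun r s ↦ calc
    (∫ t in s₀..r, h t) + h r * (s - r) ≤ (∫ t in s₀..r, h t) + ∫ t in r..s, h t := by
      gcongr
      exact mul_sub_le_integral_of_monotone hh.monotone s r
    _ = ∫ t in s₀..s, h t := intervalIntegral.integral_add_adjacent_intervals
      hh.monotone.intervalIntegrable hh.monotone.intervalIntegrable
  have hright : 0 < h (s₀ + 1) := h₀ ▸ hh (lt_add_one s₀)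
  have hleft : h (s₀ - 1) < 0 := h₀ ▸ hh (sub_one_lt s₀)
  rw [cocompact_eq_atBot_atTop, tendsto_sup]
  constructor
  · refine tendsto_atTop_mono (hbound (s₀ - 1)) (tendsto_atTop_add_const_left _ _ ?_)
    exact (tendsto_atBot_add_const_right _ _ tendsto_id).const_mul_atBot_of_neg hleft
  · refine tendsto_atTop_mono (hbound (s₀ + 1)) (tendsto_atTop_add_const_left _ _ ?_)
    exact (tendsto_atTop_add_const_right _ _ tendsto_id).const_mul_atTop hright

theorem contDiff_one_integral (hh : Continuous h) : ContDiff ℝ 1 fun s ↦ ∫ t in s₀..s, h t :=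
  contDiff_one_iff_deriv.mpr
    ⟨fun s ↦ (hh.integral_hasStrictDerivAt s₀ s).hasDerivAt.differentiableAt,
      by rwa [funext (hh.deriv_integral _ s₀)]⟩

end Potential

section Lyapunov

/-- `V` is a strict, radially unbounded `C¹` Lyapunov function for `ẋ = F x` at `x₀`. -/
structure IsStrictLyapunov {E : Type*} [NormedAddCommGroup E] [NormedSpace ℝ E]
    (F : E → E) (x₀ : E) (V : E → ℝ) : Prop where
  contDiff : ContDiff ℝ 1 V
  map_equilibrium : V x₀ = 0
  pos : ∀ x ≠ x₀, 0 < V x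
  tendsto_atTop : Tendsto V (cocompact E) atTop
  fderiv_neg : ∀ x ≠ x₀, fderiv ℝ V x (F x) < 0

variable {E H : Type*} [NormedAddCommGroup E] [NormedSpace ℝ E]
  [NormedAddCommGroup H] [InnerProductSpace ℝ H]

/-- The candidate Lyapunov function: the potential of the scalar field `h`, based at `s₀`, in the
averaged coordinate `w x`, plus a weighted square of the transverse coordinate `S x`. -/
noncomputable def splitLyapunov (h : ℝ → ℝ) (s₀ : ℝ) (w : E →L[ℝ] ℝ) (S : E →L[ℝ] H) (a : ℝ)
    (x : E) : ℝ :=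
  (∫ t in s₀..w x, h t) + a * ‖S x‖ ^ 2

variable {h : ℝ → ℝ} {s₀ a : ℝ} {w : E →L[ℝ] ℝ} {S : E →L[ℝ] H} {x₀ : E}

theorem contDiff_splitLyapunov (hh : Continuous h) : ContDiff ℝ 1 (splitLyapunov h s₀ w S a) :=
  ((contDiff_one_integral hh).comp w.contDiff).add (contDiff_const.mul (S.contDiff.norm_sq ℝ))

theorem fderiv_splitLyapunov_apply (hh : Continuous h) (x v : E) :
    fderiv ℝ (splitLyapunov h s₀ w S a) x v = h (w x) * w v + 2 * a * ⟪S x, S v⟫_ℝ := by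
  have hpotential : HasFDerivAt (fun x ↦ ∫ t in s₀..w x, h t) (h (w x) • w) x :=
    (hh.integral_hasStrictDerivAt s₀ (w x)).hasDerivAt.comp_hasFDerivAt x w.hasFDerivAt
  have hsq := (S.hasFDerivAt (x := x)).norm_sq.const_mul a
  have hfderiv : HasFDerivAt (splitLyapunov h s₀ w S a) _ x := hpotential.add hsq
  rw [hfderiv.fderiv]
  simp only [_root_.add_apply, _root_.smul_apply, smul_eq_mul,
    ContinuousLinearMap.comp_apply, innerSL_apply_apply, nsmul_eq_mul, Nat.cast_ofNat]
  ring

theorem splitLyapunov_pos (hh : StrictMono h) (h₀ : h (w x₀) = 0) (ha : 0 < a) (hS₀ : S x₀ = 0)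
    (hinj : Function.Injective (w.prod S)) {x : E} (hx : x ≠ x₀) :
    0 < splitLyapunov h (w x₀) w S a x := by
  have hpotential := integral_nonneg_of_monotone_of_eq_zero hh.monotone h₀ (w x)
  by_cases hw : w x = w x₀
  · have hS : S x ≠ 0 := fun hS ↦ hx (hinj (Prod.ext hw (hS.trans hS₀.symm)))
    unfold splitLyapunov
    positivity
  · have := integral_pos_of_strictMono_of_eq_zero hh h₀ hw
    unfold splitLyapunov
    positivity

theorem tendsto_splitLyapunov_cocompact [FiniteDimensional ℝ E] [ProperSpace H]
    (hh : StrictMono h) (h₀ : h s₀ = 0) (ha : 0 < a) (hinj : Function.Injective (w.prod S)) :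
    Tendsto (splitLyapunov h s₀ w S a) (cocompact E) atTop := by
  have hproper : Tendsto (w.prod S) (cocompact E) (cocompact (ℝ × H)) :=
    ((w.prod S).toLinearMap.isClosedEmbedding_of_injective
      (LinearMap.ker_eq_bot.mpr hinj)).tendsto_cocompact
  suffices Tendsto (fun p : ℝ × H ↦ (∫ t in s₀..p.1, h t) + a * ‖p.2‖ ^ 2)
    (cocompact (ℝ × H)) atTop from (this.comp hproper).congr fun _ ↦ rfl
  rw [← coprod_cocompact, Filter.coprod, tendsto_sup]
  constructor
  · exact tendsto_atTop_mono (fun p ↦ le_add_of_nonneg_right (by positivity))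
      ((tendsto_integral_cocompact_of_strictMono hh h₀).comp tendsto_comap)
  · have hsq : Tendsto (fun y : H ↦ a * ‖y‖ ^ 2) (cocompact H) atTop :=
      ((tendsto_pow_atTop two_ne_zero).comp tendsto_norm_cocompact_atTop).const_mul_atTop ha
    exact tendsto_atTop_mono (fun p ↦ le_add_of_nonneg_left
      (integral_nonneg_of_monotone_of_eq_zero hh.monotone h₀ p.1)) (hsq.comp tendsto_comap)

theorem exists_norm_sub_smul_le [FiniteDimensional ℝ E] {e : E} (hwe : w e = 1) (hSe : S e = 0)
    (hinj : Function.Injective (w.prod S)) : ∃ κ : ℝ≥0, ∀ x, ‖x - w x • e‖ ≤ κ * ‖S x‖ := by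
  obtain ⟨κ, -, hκ⟩ := LinearMap.exists_antilipschitzWith (w.prod S).toLinearMap
    (LinearMap.ker_eq_bot.mpr hinj)
  refine ⟨κ, fun x ↦ ?_⟩
  have := hκ.le_mul_dist (x - w x • e) 0
  simpa [hwe, hSe] using this

variable {L : E →L[ℝ] E} {e : E} {G : E → ℝ} {K : ℝ≥0} {c : ℝ}

theorem abs_sub_apply_smul_le (hG : LipschitzWith K G) {κ : ℝ≥0}
    (hκ : ∀ x, ‖x - w x • e‖ ≤ κ * ‖S x‖) (x : E) :
    |G x - G (w x • e)| ≤ K * κ * ‖S x‖ := calc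
  |G x - G (w x • e)| ≤ K * dist x (w x • e) := hG.dist_le_mul x _
  _ ≤ K * (κ * ‖S x‖) := by rw [dist_eq_norm]; gcongr; exact hκ x
  _ = K * κ * ‖S x‖ := (mul_assoc ..).symm

theorem fderiv_splitLyapunov_le (hG : Continuous fun s : ℝ ↦ G (s • e)) (hwe : w e = 1)
    (hSe : S e = 0) (hwL : ∀ x, w (L x) = 0)
    (hacc : StronglyAccretiveAlong S.toLinearMap L.toLinearMap c)
    {b : ℝ} (hb : ∀ x, |G x - G (w x • e)| ≤ b * ‖S x‖) (ha : 2 * a * c = b ^ 2 / 2 + 1 / 2)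
    (ha₀ : 0 ≤ a) (x : E) :
    fderiv ℝ (splitLyapunov (fun s ↦ G (s • e)) s₀ w S a) x (-G x • e - L x) ≤
      -(G (w x • e) ^ 2 + ‖S x‖ ^ 2) / 2 := by
  have hcoord : w (-G x • e - L x) = -G x := by simp [hwe, hwL]
  have htrans : S (-G x • e - L x) = -S (L x) := by simp [hSe]
  have haccx : c * ‖S x‖ ^ 2 ≤ ⟪S x, S (L x)⟫_ℝ := hacc x
  set u := G (w x • e)
  have hcross : -u * (G x - u) ≤ u ^ 2 / 2 + b ^ 2 / 2 * ‖S x‖ ^ 2 := by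
    nlinarith [sq_nonneg (u + (G x - u)),
      sq_le_sq' (neg_le_of_abs_le (hb x)) (le_of_abs_le (hb x))]
  rw [fderiv_splitLyapunov_apply hG, hcoord, htrans, inner_neg_right]
  calc u * -G x + 2 * a * -⟪S x, S (L x)⟫_ℝ
      ≤ u * -G x - 2 * a * (c * ‖S x‖ ^ 2) := by nlinarith
    _ = -u ^ 2 + -u * (G x - u) - (2 * a * c) * ‖S x‖ ^ 2 := by ring
    _ ≤ -(u ^ 2 + ‖S x‖ ^ 2) / 2 := by rw [ha]; linarith

theorem exists_isStrictLyapunov_of_split [FiniteDimensional ℝ E] [ProperSpace H]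
    (hG : LipschitzWith K G) (hmono : StrictMono fun s : ℝ ↦ G (s • e)) (h₀ : G (s₀ • e) = 0)
    (hwe : w e = 1) (hSe : S e = 0) (hinj : Function.Injective (w.prod S))
    (hwL : ∀ x, w (L x) = 0) (hc : 0 < c)
    (hacc : StronglyAccretiveAlong S.toLinearMap L.toLinearMap c) :
    ∃ V, IsStrictLyapunov (fun x ↦ -G x • e - L x) (s₀ • e) V := by
  obtain ⟨κ, hκ⟩ := exists_norm_sub_smul_le hwe hSe hinj
  have hb := abs_sub_apply_smul_le hG hκ
  set b : ℝ := K * κ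
  obtain ⟨a, ha, hac⟩ : ∃ a > 0, 2 * a * c = b ^ 2 / 2 + 1 / 2 :=
    ⟨(b ^ 2 + 1) / (4 * c), by positivity, by field_simp; ring⟩
  have hcont : Continuous fun s : ℝ ↦ G (s • e) := hG.continuous.comp (by fun_prop)
  have hws₀ : w (s₀ • e) = s₀ := by simp [hwe]
  have hSs₀ : S (s₀ • e) = 0 := by simp [hSe]
  refine ⟨splitLyapunov (fun s ↦ G (s • e)) s₀ w S a, contDiff_splitLyapunov hcont,
    by simp [splitLyapunov, hws₀, hSs₀], fun x hx ↦ ?_,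
    tendsto_splitLyapunov_cocompact hmono h₀ ha hinj, fun x hx ↦ ?_⟩
  · simpa only [hws₀] using
      splitLyapunov_pos (x₀ := s₀ • e) hmono (by simpa only [hws₀] using h₀) ha hSs₀ hinj hx
  · refine (fderiv_splitLyapunov_le hcont hwe hSe hwL hacc hb hac ha.le x).trans_lt ?_
    rw [neg_div, neg_lt_zero]
    by_cases hS : S x = 0
    · have hw : w x ≠ s₀ := fun hw ↦
        hx (hinj (Prod.ext (hw.trans hws₀.symm) (hS.trans hSs₀.symm)))
      have : G (w x • e) ≠ 0 := h₀ ▸ hmono.injective.ne hw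
      positivity
    · positivity

theorem exists_isStrictLyapunov [FiniteDimensional ℝ E] {L : Module.End ℝ E}
    (hsimple : L.charpoly.rootMultiplicity 0 ≤ 1)
    (hspec : ∀ z : ℂ, (L.charpoly.map (algebraMap ℝ ℂ)).IsRoot z → z ≠ 0 → 0 < z.re)
    (hLe : L e = 0) (hG : LipschitzWith K G) (hmono : StrictMono fun s : ℝ ↦ G (s • e))
    (h₀ : G (s₀ • e) = 0) :
    ∃ V, IsStrictLyapunov (fun x ↦ -G x • e - L x) (s₀ • e) V := by
  have he : e ≠ 0 := fun he ↦ (hmono zero_lt_one).ne (by simp only [he, smul_zero])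
  obtain ⟨w, hwe, hwL⟩ := exists_dual_comp_eq_zero hsimple he hLe
  obtain ⟨k, S, hker, c, hc, hacc⟩ := exists_real_stronglyAccretiveAlong_ker_eq hsimple hspec
  have hker : LinearMap.ker S = ℝ ∙ e :=
    hker.trans (ker_eq_span_singleton_of_rootMultiplicity_le_one hsimple he hLe)
  have hSe : S e = 0 := LinearMap.mem_ker.mp (hker ▸ Submodule.mem_span_singleton_self e)
  have hinj : Function.Injective
      ((LinearMap.toContinuousLinearMap w).prod S.toContinuousLinearMap) := by
    refine (injective_iff_map_eq_zero _).mpr fun x hx ↦ ?_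
    obtain ⟨hwx, hSx⟩ : w x = 0 ∧ S x = 0 := Prod.ext_iff.mp hx
    obtain ⟨r, rfl⟩ := Submodule.mem_span_singleton.mp (hker ▸ LinearMap.mem_ker.mpr hSx)
    have : r = 0 := by simpa [hwe] using hwx
    rw [this, zero_smul]
  exact exists_isStrictLyapunov_of_split (L := LinearMap.toContinuousLinearMap L) hG hmono h₀ hwe
    hSe hinj hwL hc hacc

end Lyapunov

section InverseMarginals

/-- `f` is `μ`-strongly monotone on `s`; for `f = J'` on an interval this is `μ`-strong convexity
of `J`. -/
def StronglyMonotoneOn (μ : ℝ) (f : ℝ → ℝ) (s : Set ℝ) : Prop :=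
  ∀ x ∈ s, ∀ y ∈ s, μ * (x - y) ^ 2 ≤ (f x - f y) * (x - y)

namespace StronglyMonotoneOn

variable {μ : ℝ} {f g : ℝ → ℝ} {s : Set ℝ}

theorem injOn (h : StronglyMonotoneOn μ f s) (hμ : 0 < μ) : Set.InjOn f s := by
  intro x hx y hy hxy
  have hmul := h x hx y hy
  rw [hxy, sub_self, zero_mul] at hmul
  have hsq : (x - y) ^ 2 = 0 := (nonpos_of_mul_nonpos_right hmul hμ).antisymm (sq_nonneg _)
  exact sub_eq_zero.mp (sq_eq_zero_iff.mp hsq)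

theorem range_rightInverse (h : StronglyMonotoneOn μ f s) (hμ : 0 < μ)
    (hmem : ∀ p, g p ∈ s) (hfg : Function.RightInverse g f) : Set.range g = s :=
  (Set.range_subset_iff.mpr hmem).antisymm fun x hx ↦
    ⟨f x, h.injOn hμ (hmem _) hx (hfg (f x))⟩

theorem lipschitzWith_rightInverse (h : StronglyMonotoneOn μ f s) (hμ : 0 < μ)
    (hmem : ∀ p, g p ∈ s) (hfg : Function.RightInverse g f) : LipschitzWith (μ⁻¹).toNNReal g := by
  refine LipschitzWith.of_dist_le_mul fun p q ↦ ?_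
  have hpq := h _ (hmem p) _ (hmem q)
  rw [hfg p, hfg q] at hpq
  rw [Real.coe_toNNReal _ (by positivity), Real.dist_eq, Real.dist_eq, le_inv_mul_iff₀ hμ]
  rcases (abs_nonneg (g p - g q)).eq_or_lt with hzero | hpos
  · rw [← hzero, mul_zero]
    positivity
  · refine le_of_mul_le_mul_right ?_ hpos
    calc μ * |g p - g q| * |g p - g q| = μ * (g p - g q) ^ 2 := by
          rw [mul_assoc, abs_mul_abs_self, sq]
      _ ≤ (p - q) * (g p - g q) := hpq
      _ ≤ |p - q| * |g p - g q| := (le_abs_self _).trans_eq (abs_mul ..)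

theorem strictMono_rightInverse (h : StronglyMonotoneOn μ f s) (hμ : 0 < μ)
    (hmem : ∀ p, g p ∈ s) (hfg : Function.RightInverse g f) : StrictMono g := fun p q hpq ↦ by
  have hmul := h _ (hmem q) _ (hmem p)
  rw [hfg p, hfg q] at hmul
  have hnonneg : 0 ≤ g q - g p :=
    nonneg_of_mul_nonneg_right (hmul.trans' (by positivity)) (sub_pos.mpr hpq)
  exact (sub_nonneg.mp hnonneg).lt_of_ne (hfg.injective.ne hpq.ne)

end StronglyMonotoneOn

theorem tendsto_coe_atTop_of_range_eq {g : ℝ → ℝ} {lo hi : EReal} (hg : Monotone g)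
    (hrange : Set.range g = Real.toEReal ⁻¹' Set.Ioo lo hi) :
    Tendsto (fun p ↦ (g p : EReal)) atTop (𝓝 hi) := by
  have hmem : ∀ p, (g p : EReal) ∈ Set.Ioo lo hi := fun p ↦
    hrange.subset (Set.mem_range_self p)
  refine tendsto_order.mpr ⟨fun a ha ↦ ?_, fun b hb ↦ .of_forall fun p ↦ (hmem p).2.trans hb⟩
  obtain ⟨x, hax, hxhi⟩ := EReal.lt_iff_exists_real_btwn.mp (max_lt ha (hmem 0).2)
  rw [max_lt_iff] at hax
  obtain ⟨p, rfl⟩ := hrange.superset ⟨(hmem 0).1.trans hax.2, hxhi⟩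
  filter_upwards [eventually_ge_atTop p] with q hq
  exact hax.1.trans_le (EReal.coe_le_coe (hg hq))

theorem tendsto_coe_atBot_of_range_eq {g : ℝ → ℝ} {lo hi : EReal} (hg : Monotone g)
    (hrange : Set.range g = Real.toEReal ⁻¹' Set.Ioo lo hi) :
    Tendsto (fun p ↦ (g p : EReal)) atBot (𝓝 lo) := by
  have hmem : ∀ p, (g p : EReal) ∈ Set.Ioo lo hi := fun p ↦
    hrange.subset (Set.mem_range_self p)
  refine tendsto_order.mpr ⟨fun a ha ↦ .of_forall fun p ↦ ha.trans (hmem p).1, fun b hb ↦ ?_⟩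
  obtain ⟨x, hlox, hxb⟩ := EReal.lt_iff_exists_real_btwn.mp (lt_min hb (hmem 0).1)
  rw [lt_min_iff] at hxb
  obtain ⟨p, rfl⟩ := hrange.superset ⟨hlox, hxb.2.trans (hmem 0).2⟩
  filter_upwards [eventually_le_atBot p] with q hq
  exact (EReal.coe_le_coe (hg hq)).trans_lt hxb.1

variable {ι α : Type*} {l : Filter α}

theorem coe_sum_ereal (s : Finset ι) (x : ι → ℝ) :
    ((∑ i ∈ s, x i : ℝ) : EReal) = ∑ i ∈ s, (x i : EReal) :=
  map_sum (⟨⟨Real.toEReal, EReal.coe_zero⟩, EReal.coe_add⟩ : ℝ →+ EReal) x s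

theorem tendsto_ereal_sum_of_ne_bot {f : ι → α → EReal} {a : ι → EReal} (s : Finset ι)
    (hf : ∀ i ∈ s, Tendsto (f i) l (𝓝 (a i))) (ha : ∀ i ∈ s, a i ≠ ⊥) :
    Tendsto (fun p ↦ ∑ i ∈ s, f i p) l (𝓝 (∑ i ∈ s, a i)) := by
  classical
  induction s using Finset.induction_on with
  | empty => exact tendsto_const_nhds
  | insert i s hi ih =>
    rw [Finset.forall_mem_insert] at hf ha
    have hsum : ∑ i ∈ s, a i ≠ ⊥ := Finset.sum_induction _ (· ≠ ⊥)
      (fun x y hx hy ↦ by simp [EReal.add_eq_bot_iff, hx, hy]) EReal.zero_ne_bot ha.2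
    simp only [Finset.sum_insert hi]
    exact (EReal.continuousAt_add (.inr hsum) (.inl ha.1)).tendsto.comp
      (hf.1.prodMk_nhds (ih hf.2 ha.2))

theorem tendsto_ereal_sum_of_ne_top {f : ι → α → EReal} {a : ι → EReal} (s : Finset ι)
    (hf : ∀ i ∈ s, Tendsto (f i) l (𝓝 (a i))) (ha : ∀ i ∈ s, a i ≠ ⊤) :
    Tendsto (fun p ↦ ∑ i ∈ s, f i p) l (𝓝 (∑ i ∈ s, a i)) := by
  classical
  induction s using Finset.induction_on with
  | empty => exact tendsto_const_nhds
  | insert i s hi ih =>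
    rw [Finset.forall_mem_insert] at hf ha
    have hsum : ∑ i ∈ s, a i ≠ ⊤ := Finset.sum_induction _ (· ≠ ⊤)
      (fun _ _ ↦ EReal.add_ne_top) EReal.zero_ne_top ha.2
    simp only [Finset.sum_insert hi]
    exact (EReal.continuousAt_add (.inl ha.1) (.inr hsum)).tendsto.comp
      (hf.1.prodMk_nhds (ih hf.2 ha.2))

theorem exists_sum_eq_of_feasible [Fintype ι] {g : ι → ℝ → ℝ} {lo hi : ι → EReal} {d : ℝ}
    (hcont : ∀ i, Continuous (g i)) (hg : ∀ i, Monotone (g i))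
    (hrange : ∀ i, Set.range (g i) = Real.toEReal ⁻¹' Set.Ioo (lo i) (hi i))
    (hlo : ∑ i, lo i < d) (hhi : d < ∑ i, hi i) : ∃ s, ∑ i, g i s = d := by
  have hmem : ∀ i, (g i 0 : EReal) ∈ Set.Ioo (lo i) (hi i) := fun i ↦
    (hrange i).subset (Set.mem_range_self 0)
  have hupper := tendsto_ereal_sum_of_ne_bot Finset.univ
    (fun i _ ↦ tendsto_coe_atTop_of_range_eq (hg i) (hrange i))
    fun i _ ↦ (bot_le.trans_lt (hmem i).2).ne'
  have hlower := tendsto_ereal_sum_of_ne_top Finset.univ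
    (fun i _ ↦ tendsto_coe_atBot_of_range_eq (hg i) (hrange i))
    fun i _ ↦ ((hmem i).1.trans_le le_top).ne
  obtain ⟨p, hp⟩ := (hlower.eventually_lt_const hlo).exists
  obtain ⟨q, hq⟩ := (hupper.eventually_const_lt hhi).exists
  rw [← coe_sum_ereal] at hp hq
  exact mem_range_of_exists_le_of_exists_ge (by fun_prop)
    ⟨p, (EReal.coe_lt_coe_iff.mp hp).le⟩ ⟨q, (EReal.coe_lt_coe_iff.mp hq).le⟩

end InverseMarginals

theorem comap_sqrt_sum_sq_atTop_le_cocompact (ι : Type*) [Fintype ι] :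
    comap (fun x : ι → ℝ ↦ √(∑ i, x i ^ 2)) atTop ≤ cocompact (ι → ℝ) := by
  have hnorm : (fun x : ι → ℝ ↦ √(∑ i, x i ^ 2)) = norm ∘ (EuclideanSpace.equiv ι ℝ).symm := by
    ext x
    simp [EuclideanSpace.norm_eq]
  rw [hnorm, ← comap_comap, comap_norm_atTop, Metric.cobounded_eq_cocompact]
  exact comap_cocompact_le (EuclideanSpace.equiv ι ℝ).symm.continuous

section DAPI

variable {ι : Type*} [Fintype ι] {g : ι → ℝ → ℝ} {d β : ℝ}

/-- The averaged frequency deviation `Δω̄` of the DAPI dynamics as a function of the marginal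
costs `η`. -/
noncomputable def frequencyDeviation (g : ι → ℝ → ℝ) (d β : ℝ) (η : ι → ℝ) : ℝ :=
  1 / β * (∑ i, g i (η i) - d)

theorem exists_lipschitzWith_frequencyDeviation {K : ι → ℝ≥0}
    (hg : ∀ i, LipschitzWith (K i) (g i)) : ∃ C, LipschitzWith C (frequencyDeviation g d β) := by
  refine ⟨_, LipschitzWith.of_dist_le' (K := |1 / β| * ∑ i, (K i : ℝ)) fun η ξ ↦ ?_⟩
  calc dist (frequencyDeviation g d β η) (frequencyDeviation g d β ξ)
      = |1 / β| * |∑ i, (g i (η i) - g i (ξ i))| := by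
        rw [Real.dist_eq, frequencyDeviation, frequencyDeviation, ← mul_sub,
          sub_sub_sub_cancel_right, abs_mul, Finset.sum_sub_distrib]
    _ ≤ |1 / β| * ∑ i, (K i * dist η ξ) := by
      gcongr
      refine (Finset.abs_sum_le_sum_abs ..).trans (Finset.sum_le_sum fun i _ ↦ ?_)
      exact ((hg i).dist_le_mul _ _).trans (by gcongr; exact dist_le_pi_dist η ξ i)
    _ = |1 / β| * (∑ i, (K i : ℝ)) * dist η ξ := by rw [← Finset.sum_mul, mul_assoc]

theorem strictMono_frequencyDeviation_smul_one [Nonempty ι] (hβ : 0 < β)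
    (hg : ∀ i, StrictMono (g i)) :
    StrictMono fun s : ℝ ↦ frequencyDeviation g d β (s • 1) := fun s t hst ↦ by
  have hsum : ∑ i, g i s < ∑ i, g i t :=
    Finset.sum_lt_sum_of_nonempty Finset.univ_nonempty fun i _ ↦ hg i hst
  simp only [frequencyDeviation, Pi.smul_apply, Pi.one_apply, smul_eq_mul, mul_one]
  gcongr

/-- The reduced DAPI vector field `η̇ = -Δω̄ 𝟙 - L η`. -/
noncomputable def reducedDAPI (g : ι → ℝ → ℝ) (d β : ℝ) (L : Matrix ι ι ℝ) (η : ι → ℝ) : ι → ℝ :=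
  fun j ↦ -(1 / β) * (∑ i, g i (η i) - d) - (L *ᵥ η) j

theorem reducedDAPI_eq (L : Matrix ι ι ℝ) (η : ι → ℝ) :
    reducedDAPI g d β L η = -frequencyDeviation g d β η • 1 - L *ᵥ η := by
  ext j
  simp [reducedDAPI, frequencyDeviation]

theorem reducedDAPI_smul_one_eq_zero_iff [Nonempty ι] {L : Matrix ι ι ℝ} (hL : L *ᵥ 1 = 0)
    {s : ℝ} : reducedDAPI g d β L (s • 1) = 0 ↔ frequencyDeviation g d β (s • 1) = 0 := by
  simp [reducedDAPI_eq, mulVec_smul, hL]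

theorem exists_isStrictLyapunov_reducedDAPI [Nonempty ι] [DecidableEq ι] {K : ι → ℝ≥0} {s₀ : ℝ}
    {L : Matrix ι ι ℝ} (hlip : ∀ i, LipschitzWith (K i) (g i)) (hmono : ∀ i, StrictMono (g i))
    (hβ : 0 < β) (hs₀ : frequencyDeviation g d β (s₀ • 1) = 0) (hL : L *ᵥ 1 = 0)
    (hsimple : (L.map Complex.ofReal).charpoly.rootMultiplicity 0 = 1)
    (hspec : ∀ z : ℂ, (L.map Complex.ofReal).charpoly.IsRoot z → z ≠ 0 → 0 < z.re) :
    ∃ V, IsStrictLyapunov (reducedDAPI g d β L) (s₀ • 1) V := by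
  have hcharpoly : (L.map Complex.ofReal).charpoly = L.toLin'.charpoly.map (algebraMap ℝ ℂ) := by
    rw [charpoly_toLin', ← charpoly_map]
    rfl
  rw [hcharpoly] at hsimple hspec
  have hsimple' : L.toLin'.charpoly.rootMultiplicity 0 ≤ 1 := by
    rw [eq_rootMultiplicity_map (algebraMap ℝ ℂ).injective, map_zero, hsimple]
  obtain ⟨C, hC⟩ := exists_lipschitzWith_frequencyDeviation (d := d) (β := β) hlip
  have hdev : StrictMono fun s : ℝ ↦ frequencyDeviation g d β (s • 1) :=
    strictMono_frequencyDeviation_smul_one hβ hmono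
  simpa only [← reducedDAPI_eq, toLin'_apply] using
    exists_isStrictLyapunov hsimple' hspec hL hC hdev hs₀

theorem dapi_reduced_dynamics_lyapunov_general {ι : Type*} [Fintype ι] [DecidableEq ι]
    (lo hi : ι → EReal) (f : ι → ℝ → ℝ) (μ : ι → ℝ) (hμ : ∀ i, 0 < μ i)
    (hf : ∀ i, StronglyMonotoneOn (μ i) (f i) (Real.toEReal ⁻¹' Set.Ioo (lo i) (hi i)))
    (d : ℝ) (hfeas_lo : ∑ i, lo i < (d : EReal)) (hfeas_hi : (d : EReal) < ∑ i, hi i)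
    (g : ι → ℝ → ℝ) (hg_mem : ∀ i p, g i p ∈ Real.toEReal ⁻¹' Set.Ioo (lo i) (hi i))
    (hg_right : ∀ i, Function.RightInverse (g i) (f i))
    (L : Matrix ι ι ℝ) (hL1 : L *ᵥ 1 = 0)
    (hsimple : (L.map Complex.ofReal).charpoly.rootMultiplicity 0 = 1)
    (hspec : ∀ z : ℂ, (L.map Complex.ofReal).charpoly.IsRoot z → z ≠ 0 → 0 < z.re)
    (β : ℝ) (hβ : 0 < β) :
    ∃ ηbar : ι → ℝ,
      ((∃ c : ℝ, ηbar = fun _ => c) ∧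
        (∀ j, -(1 / β) * ((∑ i, g i (ηbar i)) - d) - L.mulVec ηbar j = 0)) ∧
      (∀ η' : ι → ℝ,
        ((∃ c : ℝ, η' = fun _ => c) ∧
          (∀ j, -(1 / β) * ((∑ i, g i (η' i)) - d) - L.mulVec η' j = 0)) → η' = ηbar) ∧
      (∃ 𝒱 : (ι → ℝ) → ℝ,
        ContDiff ℝ 1 𝒱 ∧
        𝒱 ηbar = 0 ∧
        (∀ η : ι → ℝ, η ≠ ηbar → 0 < 𝒱 η) ∧
        Tendsto 𝒱 (Filter.comap (fun η : ι → ℝ => Real.sqrt (∑ i, (η i) ^ 2)) atTop)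
          atTop ∧
        (∀ η : ι → ℝ, η ≠ ηbar →
          fderiv ℝ 𝒱 η (fun j => -(1 / β) * ((∑ i, g i (η i)) - d) - L.mulVec η j) < 0)) := by
  rcases isEmpty_or_nonempty ι with _ | _
  · exact absurd (hfeas_lo.trans hfeas_hi) (by simp)
  have hlip := fun i ↦ (hf i).lipschitzWith_rightInverse (hμ i) (hg_mem i) (hg_right i)
  have hmono := fun i ↦ (hf i).strictMono_rightInverse (hμ i) (hg_mem i) (hg_right i)
  obtain ⟨s₀, hs₀⟩ := exists_sum_eq_of_feasible (fun i ↦ (hlip i).continuous)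
    (fun i ↦ (hmono i).monotone)
    (fun i ↦ (hf i).range_rightInverse (hμ i) (hg_mem i) (hg_right i)) hfeas_lo hfeas_hi
  have hconst : ∀ s : ℝ, (fun _ : ι ↦ s) = s • 1 := fun s ↦ by ext; simp
  have hdev₀ : frequencyDeviation g d β (s₀ • 1) = 0 := by simp [frequencyDeviation, hs₀]
  obtain ⟨V, hV⟩ := exists_isStrictLyapunov_reducedDAPI hlip hmono hβ hdev₀ hL1 hsimple hspec
  refine ⟨s₀ • 1, ⟨⟨s₀, (hconst s₀).symm⟩,
    congrFun ((reducedDAPI_smul_one_eq_zero_iff hL1).mpr hdev₀)⟩, ?_, V, hV.contDiff,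
    hV.map_equilibrium, hV.pos, hV.tendsto_atTop.mono_left
      (comap_sqrt_sum_sq_atTop_le_cocompact ι), hV.fderiv_neg⟩
  rintro _ ⟨⟨s, rfl⟩, hs⟩
  rw [hconst] at hs ⊢
  have hdev : frequencyDeviation g d β (s • 1) = 0 :=
    (reducedDAPI_smul_one_eq_zero_iff hL1).mp (funext hs)
  rw [(strictMono_frequencyDeviation_smul_one hβ hmono).injective (hdev.trans hdev₀.symm)]

end DAPI

/-- Core of the paper's Theorem 1: the reduced DAPI dynamics
`F(η) = −(1/β)𝟙(Σᵢ gᵢ(ηᵢ) − d) − Lη`, with `gᵢ = (Jᵢ')⁻¹`, have a unique equilibrium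
`η̄ ∈ span 𝟙`, and there is a strict, radially unbounded Lyapunov function for it. -/
theorem dapi_reduced_dynamics_lyapunov
    (m : ℕ) (hm : 2 ≤ m)
    (lo hi : Fin m → EReal) (hlohi : ∀ i, lo i < hi i)
    (J J' : Fin m → ℝ → ℝ) (μ : Fin m → ℝ) (hμ : ∀ i, 0 < μ i)
    (hderiv : ∀ i, ∀ x : ℝ, lo i < (x : EReal) → (x : EReal) < hi i →
      HasDerivAt (J i) (J' i x) x)
    (hJ'cont : ∀ i, ContinuousOn (J' i) {x : ℝ | lo i < (x : EReal) ∧ (x : EReal) < hi i})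
    (hconv : ∀ i, ∀ x y : ℝ, lo i < (x : EReal) → (x : EReal) < hi i →
      lo i < (y : EReal) → (y : EReal) < hi i →
      μ i * (x - y) ^ 2 ≤ (J' i x - J' i y) * (x - y))
    (hbarrier_lo : ∀ i, ∀ a : ℝ, lo i = (a : EReal) →
      Tendsto (J i) (nhdsWithin a (Set.Ioi a)) atTop)
    (hbarrier_hi : ∀ i, ∀ b : ℝ, hi i = (b : EReal) →
      Tendsto (J i) (nhdsWithin b (Set.Iio b)) atTop)
    (d : ℝ)
    (hfeas_lo : ∑ i, lo i < (d : EReal)) (hfeas_hi : (d : EReal) < ∑ i, hi i)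
    (g : Fin m → ℝ → ℝ)
    (hg_mem : ∀ i, ∀ p : ℝ, lo i < (g i p : EReal) ∧ (g i p : EReal) < hi i)
    (hg_right : ∀ i, ∀ p : ℝ, J' i (g i p) = p)
    (hg_left : ∀ i, ∀ x : ℝ, lo i < (x : EReal) → (x : EReal) < hi i → g i (J' i x) = x)
    (L : Matrix (Fin m) (Fin m) ℝ)
    (hL1 : L.mulVec (fun _ => (1 : ℝ)) = 0)
    (hsimple : ((L.map (Complex.ofReal)).charpoly).rootMultiplicity 0 = 1)
    (hspec : ∀ z : ℂ, ((L.map (Complex.ofReal)).charpoly).IsRoot z → z ≠ 0 → 0 < z.re)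
    (β : ℝ) (hβ : 0 < β) :
    ∃ ηbar : Fin m → ℝ,
      ((∃ c : ℝ, ηbar = fun _ => c) ∧
        (∀ j, -(1 / β) * ((∑ i, g i (ηbar i)) - d) - L.mulVec ηbar j = 0)) ∧
      (∀ η' : Fin m → ℝ,
        ((∃ c : ℝ, η' = fun _ => c) ∧
          (∀ j, -(1 / β) * ((∑ i, g i (η' i)) - d) - L.mulVec η' j = 0)) → η' = ηbar) ∧
      (∃ 𝒱 : (Fin m → ℝ) → ℝ,
        ContDiff ℝ 1 𝒱 ∧
        𝒱 ηbar = 0 ∧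
        (∀ η : Fin m → ℝ, η ≠ ηbar → 0 < 𝒱 η) ∧
        Tendsto 𝒱 (Filter.comap (fun η : Fin m → ℝ => Real.sqrt (∑ i, (η i) ^ 2)) atTop)
          atTop ∧
        (∀ η : Fin m → ℝ, η ≠ ηbar →
          fderiv ℝ 𝒱 η (fun j => -(1 / β) * ((∑ i, g i (η i)) - d) - L.mulVec η j) < 0)) :=
  dapi_reduced_dynamics_lyapunov_general lo hi J' μ hμ
    (fun i x hx y hy ↦ hconv i x y hx.1 hx.2 hy.1 hy.2) d hfeas_lo hfeas_hi g hg_mem hg_right L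
    hL1 hsimple hspec β hβ
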